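/- Let f, g : [0,∞) → ℝ be càdlàg functions such that Δf(t) ≥ 0 for every t > 0, g is strictly increasing, and f(0) + g(0) ≥ 0. Then the time-change equation TCE(f,g) admits at most one solution: if h¹ and h² are both solutions, then h¹(t) = h²(t) for all t ≥ 0. -/

import Mathlib

/-!
Write `c = posTime h`; it is nondecreasing and 1-Lipschitz.

* Every solution is nonnegative (`TCESol.nonneg`). If `h t < 0`, let `s` be the supremum of the times
  in `[0,t]` at which `h ≥ 0`. Since `f` has no negative jumps and `g` is increasing, `h s ≥ 0`. On
  `(s,t]` the function `h` is negative, so `c` is constant there and `h t = f (c s) + g t ≥ h s ≥ 0`.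
* Two solutions have the same clock (`TCESol.posTime_le`). If `c₁ t < c₂ t`, let `s` be the last time
  before `t` with `c₂ s ≤ c₁ s`. For `u ∈ (s,t]`, the clock `c₂` reaches the level `c₁ u` at some time
  `v < u`, so `h₁ u = f (c₂ v) + g u > h₂ v ≥ 0`. Hence `c₁` runs at full speed on `(s,t]`, which
  prevents the 1-Lipschitz `c₂` from overtaking it.

The equation then determines `h` from `c`.
-/

open MeasureTheory Set Function Filter Topology

/-- `f : ℝ → ℝ` is càdlàg on `[0,∞)`: right-continuous at every `t ≥ 0`
and with left limits at every `t > 0`. -/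
def CadlagOn (f : ℝ → ℝ) : Prop :=
  (∀ t : ℝ, 0 ≤ t → ContinuousWithinAt f (Ici t) t) ∧
  (∀ t : ℝ, 0 < t → ∃ L : ℝ, Filter.Tendsto f (nhdsWithin t (Iio t)) (nhds L))

/-- `f` has non-negative jumps on `(0,∞)`: `Δf(t) = f t − f(t−) ≥ 0`. -/
def NonnegJumps (f : ℝ → ℝ) : Prop :=
  ∀ t : ℝ, 0 < t → Function.leftLim f t ≤ f t

/-- `Leb({s ∈ [0,t] : h(s) > 0})`. -/
noncomputable def posTime (h : ℝ → ℝ) (t : ℝ) : ℝ :=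
  (volume {s ∈ Icc (0:ℝ) t | 0 < h s}).toReal

/-- `Leb({s ∈ [0,t] : h(s) = 0})`. -/
noncomputable def zeroTime (h : ℝ → ℝ) (t : ℝ) : ℝ :=
  (volume {s ∈ Icc (0:ℝ) t | h s = 0}).toReal

/-- `h` is a solution of the time-change equation `TCE(f,g)`:
`h` is measurable on `[0,∞)` and `h(t) = f(c(t)) + g(t)` for all `t ≥ 0`,
where `c(t) = Leb({s ∈ [0,t] : h(s) > 0})`. -/
def TCESol (f g h : ℝ → ℝ) : Prop :=
  Measurable ((Ici (0:ℝ)).restrict h) ∧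
  ∀ t : ℝ, 0 ≤ t → h t = f (posTime h t) + g t

lemma posTime_set_ne_top (h : ℝ → ℝ) (t : ℝ) : volume {s ∈ Icc (0:ℝ) t | 0 < h s} ≠ ⊤ :=
  ((measure_mono (sep_subset _ _)).trans_lt measure_Icc_lt_top).ne

lemma posTime_nonneg (h : ℝ → ℝ) (t : ℝ) : 0 ≤ posTime h t := ENNReal.toReal_nonneg

lemma posTime_zero (h : ℝ → ℝ) : posTime h 0 = 0 := by
  have : volume {s ∈ Icc (0:ℝ) 0 | 0 < h s} = 0 :=
    measure_mono_null (sep_subset _ _) (by simp)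
  rw [posTime, this, ENNReal.toReal_zero]

lemma posTime_mono (h : ℝ → ℝ) : Monotone (posTime h) := fun _ t hst =>
  ENNReal.toReal_mono (posTime_set_ne_top h t)
    (measure_mono fun _ hx => ⟨⟨hx.1.1, hx.1.2.trans hst⟩, hx.2⟩)

lemma posTime_le_add (h : ℝ → ℝ) {s t : ℝ} (hst : s ≤ t) :
    posTime h t ≤ posTime h s + (t - s) := by
  have hsub : {x ∈ Icc (0:ℝ) t | 0 < h x} ⊆ {x ∈ Icc (0:ℝ) s | 0 < h x} ∪ Ioc s t := by
    rintro x ⟨⟨hx0, hxt⟩, hx⟩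
    rcases le_or_gt x s with hxs | hxs
    · exact Or.inl ⟨⟨hx0, hxs⟩, hx⟩
    · exact Or.inr ⟨hxs, hxt⟩
  have hle := (measure_mono (μ := volume) hsub).trans (measure_union_le _ _)
  have h2 := ENNReal.toReal_mono (ENNReal.add_ne_top.2
    ⟨posTime_set_ne_top h s, measure_Ioc_lt_top.ne⟩) hle
  rw [ENNReal.toReal_add (posTime_set_ne_top h s) measure_Ioc_lt_top.ne, Real.volume_Ioc,
    ENNReal.toReal_ofReal (by linarith)] at h2
  exact h2

lemma posTime_continuous (h : ℝ → ℝ) : Continuous (posTime h) := by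
  refine LipschitzWith.continuous (K := 1) (LipschitzWith.of_le_add fun x y => ?_)
  rcases le_total x y with hxy | hxy
  · exact (posTime_mono h hxy).trans (le_add_of_nonneg_right dist_nonneg)
  · rw [Real.dist_eq, abs_of_nonneg (by linarith)]
    exact posTime_le_add h hxy

lemma posTime_eq_of_nonpos (h : ℝ → ℝ) {s t : ℝ} (hst : s ≤ t)
    (hneg : ∀ u ∈ Ioc s t, h u ≤ 0) : posTime h t = posTime h s := by
  have : {x ∈ Icc (0:ℝ) t | 0 < h x} = {x ∈ Icc (0:ℝ) s | 0 < h x} := by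
    ext x
    refine ⟨fun hx => ⟨⟨hx.1.1, ?_⟩, hx.2⟩, fun hx => ⟨⟨hx.1.1, hx.1.2.trans hst⟩, hx.2⟩⟩
    by_contra! hxs
    exact (hneg x ⟨hxs, hx.1.2⟩).not_gt hx.2
  simp only [posTime, this]

lemma posTime_ge_of_pos (h : ℝ → ℝ) {s t : ℝ} (hs : 0 ≤ s) (hst : s ≤ t)
    (hpos : ∀ u ∈ Ioc s t, 0 < h u) : posTime h s + (t - s) ≤ posTime h t := by
  have hsub : {x ∈ Icc (0:ℝ) s | 0 < h x} ∪ Ioc s t ⊆ {x ∈ Icc (0:ℝ) t | 0 < h x} := by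
    rintro x (hx | hx)
    · exact ⟨⟨hx.1.1, hx.1.2.trans hst⟩, hx.2⟩
    · exact ⟨⟨hs.trans hx.1.le, hx.2⟩, hpos x hx⟩
  have hdisj : Disjoint {x ∈ Icc (0:ℝ) s | 0 < h x} (Ioc s t) :=
    Set.disjoint_left.2 fun x hx hx' => hx.1.2.not_gt hx'.1
  have hle := measure_mono (μ := volume) hsub
  rw [measure_union hdisj measurableSet_Ioc] at hle
  have h2 := ENNReal.toReal_mono (posTime_set_ne_top h t) hle
  rw [ENNReal.toReal_add (posTime_set_ne_top h s) measure_Ioc_lt_top.ne, Real.volume_Ioc,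
    ENNReal.toReal_ofReal (by linarith)] at h2
  exact h2

/-- Without negative jumps, `f` is upper semicontinuous from the left along `[0,∞)`. -/
lemma CadlagOn.upper_left {f : ℝ → ℝ} (hf : CadlagOn f) (hjump : NonnegJumps f)
    {a ε : ℝ} (ha : 0 ≤ a) (hε : 0 < ε) :
    ∃ δ > 0, ∀ x, 0 ≤ x → a - δ < x → x ≤ a → f x < f a + ε := by
  rcases ha.eq_or_lt with rfl | ha
  · refine ⟨1, one_pos, fun x hx _ hxa => ?_⟩
    rw [le_antisymm hxa hx]
    linarith
  · obtain ⟨L, hL⟩ := hf.2 a ha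
    have hLf : L ≤ f a := by
      have := hjump a ha
      rwa [leftLim_eq_of_tendsto hL] at this
    have hev := hL.eventually (gt_mem_nhds (show L < f a + ε by linarith))
    obtain ⟨l, hl, hsub⟩ := mem_nhdsLT_iff_exists_Ioo_subset.1 hev
    have hl' : l < a := hl
    refine ⟨a - l, by linarith, fun x _ hx hxa => ?_⟩
    rcases hxa.eq_or_lt with rfl | hxa
    · linarith
    · exact hsub ⟨by linarith, hxa⟩

lemma TCESol.nonneg {f g h : ℝ → ℝ} (hf : CadlagOn f) (hjump : NonnegJumps f)
    (hg : StrictMonoOn g (Ici 0)) (h0 : 0 ≤ f 0 + g 0) (hsol : TCESol f g h)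
    {t : ℝ} (ht : 0 ≤ t) : 0 ≤ h t := by
  by_contra! hneg
  set S : Set ℝ := {u ∈ Icc (0:ℝ) t | 0 ≤ h u}
  have h0S : (0:ℝ) ∈ S := ⟨⟨le_rfl, ht⟩, by rw [hsol.2 0 le_rfl, posTime_zero]; exact h0⟩
  have hbdd : BddAbove S := ⟨t, fun u hu => hu.1.2⟩
  set s := sSup S
  have hs0 : 0 ≤ s := le_csSup hbdd h0S
  have hst : s ≤ t := csSup_le ⟨0, h0S⟩ fun u hu => hu.1.2
  have hs : 0 ≤ h s := by
    by_contra! hlt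
    obtain ⟨δ, hδ, hfδ⟩ := hf.upper_left hjump (posTime_nonneg h s) (neg_pos.2 hlt)
    obtain ⟨u, hu, hus⟩ := exists_lt_of_lt_csSup ⟨0, h0S⟩ (show s - δ < s by linarith)
    have hu_le : u ≤ s := le_csSup hbdd hu
    have h1 := hfδ (posTime h u) (posTime_nonneg h u)
      (by linarith [posTime_le_add h hu_le]) (posTime_mono h hu_le)
    have h2 := hg.monotoneOn hu.1.1 hs0 hu_le
    have h3 := hu.2
    rw [hsol.2 u hu.1.1] at h3
    linarith [hsol.2 s hs0]
  have hc : posTime h t = posTime h s := posTime_eq_of_nonpos h hst fun u hu => by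
    by_contra! hpos
    exact hu.1.not_ge (le_csSup hbdd ⟨⟨hs0.trans hu.1.le, hu.2⟩, hpos.le⟩)
  have := hg.monotoneOn hs0 ht hst
  linarith [hsol.2 s hs0, hsol.2 t ht, congrArg f hc]

/-- The clock of a solution is never behind the clock of a nonnegative solution. -/
lemma TCESol.posTime_le {f g h₁ h₂ : ℝ → ℝ} (hg : StrictMonoOn g (Ici 0))
    (hsol₁ : TCESol f g h₁) (hsol₂ : TCESol f g h₂) (hnn : ∀ v, 0 ≤ v → 0 ≤ h₂ v)
    {t : ℝ} (ht : 0 ≤ t) : posTime h₂ t ≤ posTime h₁ t := by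
  by_contra! hlt
  set S : Set ℝ := Icc 0 t ∩ {u | posTime h₂ u ≤ posTime h₁ u}
  have h0S : (0:ℝ) ∈ S := ⟨⟨le_rfl, ht⟩, by simp [posTime_zero]⟩
  have hcpt : IsCompact S :=
    isCompact_Icc.inter_right (isClosed_le (posTime_continuous h₂) (posTime_continuous h₁))
  obtain ⟨s, hs, hmax⟩ := hcpt.exists_isGreatest ⟨0, h0S⟩
  have hpos : ∀ u ∈ Ioc s t, 0 < h₁ u := by
    intro u hu
    have hu0 : 0 ≤ u := hs.1.1.trans hu.1.le
    have hcu : posTime h₁ u < posTime h₂ u := by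
      by_contra! hle
      exact hu.1.not_ge (hmax ⟨⟨hu0, hu.2⟩, hle⟩)
    -- the time at which the second clock reaches the level `posTime h₁ u`
    obtain ⟨v, hv, hvu⟩ := intermediate_value_Icc hu0 (posTime_continuous h₂).continuousOn
      (show posTime h₁ u ∈ Icc (posTime h₂ 0) (posTime h₂ u) from
        ⟨by rw [posTime_zero]; exact posTime_nonneg _ _, hcu.le⟩)
    have hvlt : v < u := hv.2.lt_of_ne (by rintro rfl; exact hcu.ne' hvu)
    have h1 := hg hv.1 hu0 hvlt
    have h2 := hnn v hv.1
    rw [hsol₂.2 v hv.1, hvu] at h2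
    rw [hsol₁.2 u hu0]
    linarith
  have h1 := posTime_ge_of_pos h₁ hs.1.1 hs.1.2 hpos
  have h2 := posTime_le_add h₂ hs.1.2
  have h3 : posTime h₂ s ≤ posTime h₁ s := hs.2
  linarith

/-- If `g` is strictly increasing, `TCE(f,g)` admits at most one solution. -/
theorem tce_uniqueness
    (f g h₁ h₂ : ℝ → ℝ)
    (hf : CadlagOn f) (hg : CadlagOn g)
    (hjump : NonnegJumps f)
    (hgmono : StrictMonoOn g (Ici 0))
    (h0 : 0 ≤ f 0 + g 0)
    (hsol₁ : TCESol f g h₁) (hsol₂ : TCESol f g h₂) :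
    ∀ t : ℝ, 0 ≤ t → h₁ t = h₂ t := by
  intro t ht
  have hc : posTime h₁ t = posTime h₂ t := le_antisymm
    (hsol₂.posTime_le hgmono hsol₁ (fun _ hv => hsol₁.nonneg hf hjump hgmono h0 hv) ht)
    (hsol₁.posTime_le hgmono hsol₂ (fun _ hv => hsol₂.nonneg hf hjump hgmono h0 hv) ht)
  rw [hsol₁.2 t ht, hsol₂.2 t ht, hc]
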